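/- Pinsker-Fano secrecy bound: let K and T be finite sets with |K| >= 2 and let P be a probability distribution on K x K x T with coordinates (S_A, S, T). Suppose I(S : T)_P <= epsilon, Pr[S_A != S] := sum over triples with s_A != s of P(s_A,s,t) <= epsilon, and 0 <= epsilon <= 1/2. Then (1/2) * sum over (s_A,s,t) of | P(s_A,s,t) - P_{S_A S}(s_A,s) * P_T(t) | <= (1/sqrt(2)) * sqrt( epsilon + h(epsilon) + epsilon * log2(|K| - 1) ), where P_{S_A S} and P_T are the indicated marginals of P. -/

import Mathlib

/-- Shannon entropy (base-2) of a finitely supported real-valued distribution. -/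
noncomputable def shannonEnt {α : Type} [Fintype α] (p : α → ℝ) : ℝ :=
  -∑ a, p a * Real.logb 2 (p a)

/-- Shannon mutual information (base-2) of a joint distribution on `α × β`. -/
noncomputable def mutInfo {α β : Type} [Fintype α] [Fintype β] (R : α → β → ℝ) : ℝ :=
  shannonEnt (fun a => ∑ b, R a b) + shannonEnt (fun b => ∑ a, R a b) -
    shannonEnt (fun p : α × β => R p.1 p.2)

/-- The binary Shannon entropy `h(ε) = -ε log₂ ε - (1-ε) log₂ (1-ε)` (with `h(0)=0`). -/
noncomputable def binEnt (x : ℝ) : ℝ :=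
  -(x * Real.logb 2 x) - (1 - x) * Real.logb 2 (1 - x)

/-!
The bound is Pinsker's inequality for the law of `((S_A, S), T)` against the product of its
marginals, whose relative entropy is `I(S_A S : T)`. Expanding in entropies,
`I(S_A S : T) - I(S : T) - H(S_A | S) = H(S T) - H(S_A S T) ≤ 0`, and Fano's inequality bounds
`H(S_A | S)` in terms of `Pr[S_A ≠ S]`.

Pinsker's inequality follows by Cauchy–Schwarz from `3 (x - 1)² ≤ (2 x + 4) klFun x`, and Fano's
from Gibbs' inequality applied to the channel that is correct with probability `1 - Pr[S_A ≠ S]`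
and uniform over the wrong symbols otherwise.
-/

open Real InformationTheory

section RelEntropy

variable {ι : Type*} [Fintype ι] {p q u v : ι → ℝ}

/-- Relative entropy, in nats, of nonnegative weights `p` with respect to `q`. It has its usual
meaning only if `p` vanishes wherever `q` does, since `p i / 0 = 0`. -/
noncomputable def relEntropy (p q : ι → ℝ) : ℝ := ∑ i, p i * log (p i / q i)

private lemma hasDerivAt_two_mul_add_four_mul_klFun_sub {x : ℝ} (hx : 0 < x) :
    HasDerivAt (fun x ↦ (2 * x + 4) * klFun x - 3 * (x - 1) ^ 2)
      (4 * ((x + 1) * log x - 2 * (x - 1))) x := by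
  have hlin : HasDerivAt (fun x : ℝ ↦ 2 * x + 4) 2 x := by
    simpa using ((hasDerivAt_id x).const_mul 2).add_const 4
  have hsq : HasDerivAt (fun x : ℝ ↦ 3 * (x - 1) ^ 2) (3 * (2 * (x - 1))) x := by
    simpa using (((hasDerivAt_id x).sub_const 1).pow 2).const_mul 3
  refine ((hlin.mul (hasDerivAt_klFun hx.ne')).sub hsq).congr_deriv ?_
  rw [klFun_apply]
  ring

private lemma hasDerivAt_add_one_mul_log_sub {x : ℝ} (hx : 0 < x) :
    HasDerivAt (fun x ↦ 4 * ((x + 1) * log x - 2 * (x - 1))) (4 * (log x + x⁻¹ - 1)) x := by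
  have hlin : HasDerivAt (fun x : ℝ ↦ 2 * (x - 1)) 2 x := by
    simpa using ((hasDerivAt_id x).sub_const 1).const_mul 2
  refine (((((hasDerivAt_id x).add_const 1).mul (hasDerivAt_log hx.ne')).sub
    hlin).const_mul 4).congr_deriv ?_
  simp only [id]
  field_simp
  ring

lemma convexOn_two_mul_add_four_mul_klFun_sub :
    ConvexOn ℝ (Set.Ici 0) fun x ↦ (2 * x + 4) * klFun x - 3 * (x - 1) ^ 2 := by
  refine convexOn_of_hasDerivWithinAt2_nonneg (convex_Ici 0) (by fun_prop)
    (f' := fun x ↦ 4 * ((x + 1) * log x - 2 * (x - 1))) (f'' := fun x ↦ 4 * (log x + x⁻¹ - 1))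
    ?_ ?_ ?_ <;> rw [interior_Ici] <;> intro x hx
  · exact (hasDerivAt_two_mul_add_four_mul_klFun_sub hx).hasDerivWithinAt
  · exact (hasDerivAt_add_one_mul_log_sub hx).hasDerivWithinAt
  · linarith [one_sub_inv_le_log_of_pos hx]

lemma three_mul_sub_one_sq_le_mul_klFun {x : ℝ} (hx : 0 ≤ x) :
    3 * (x - 1) ^ 2 ≤ (2 * x + 4) * klFun x := by
  have hderiv :
      derivWithin (fun x ↦ (2 * x + 4) * klFun x - 3 * (x - 1) ^ 2) (Set.Ioi 1) 1 = 0 := by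
    rw [(hasDerivAt_two_mul_add_four_mul_klFun_sub one_pos).hasDerivWithinAt.derivWithin
      (uniqueDiffWithinAt_Ioi 1)]
    simp
  have hmin := convexOn_two_mul_add_four_mul_klFun_sub.isMinOn_of_rightDeriv_eq_zero
    (by simp) hderiv hx
  simpa [klFun_one] using hmin

lemma mul_klFun_div {a b : ℝ} (hab : b = 0 → a = 0) :
    b * klFun (a / b) = a * log (a / b) + b - a := by
  rcases eq_or_ne b 0 with rfl | hb
  · simp [hab rfl]
  · rw [klFun_apply]
    field_simp

lemma three_mul_sub_sq_le_mul_klFun {a b : ℝ} (ha : 0 ≤ a) (hb : 0 ≤ b) (hab : b = 0 → a = 0) :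
    3 * (a - b) ^ 2 ≤ (2 * a + 4 * b) * (b * klFun (a / b)) := by
  rcases eq_or_ne b 0 with rfl | hb0
  · simp [hab rfl]
  calc 3 * (a - b) ^ 2 = b ^ 2 * (3 * (a / b - 1) ^ 2) := by field_simp
    _ ≤ b ^ 2 * ((2 * (a / b) + 4) * klFun (a / b)) := by
        have hklFun := three_mul_sub_one_sq_le_mul_klFun (div_nonneg ha hb)
        gcongr
    _ = (2 * a + 4 * b) * (b * klFun (a / b)) := by field_simp

lemma sum_mul_klFun_div (hpq : ∀ i, q i = 0 → p i = 0) :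
    ∑ i, q i * klFun (p i / q i) = relEntropy p q + ∑ i, q i - ∑ i, p i := by
  simp only [mul_klFun_div (hpq _), relEntropy, Finset.sum_sub_distrib, Finset.sum_add_distrib]

lemma relEntropy_nonneg (hp : ∀ i, 0 ≤ p i) (hq : ∀ i, 0 ≤ q i) (hpq : ∀ i, q i = 0 → p i = 0)
    (hsum : ∑ i, q i ≤ ∑ i, p i) : 0 ≤ relEntropy p q := by
  have hkl : 0 ≤ ∑ i, q i * klFun (p i / q i) :=
    Finset.sum_nonneg fun i _ ↦ mul_nonneg (hq i) (klFun_nonneg (div_nonneg (hp i) (hq i)))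
  linarith [sum_mul_klFun_div hpq]

theorem sq_sum_abs_sub_le_two_mul_relEntropy (hp : ∀ i, 0 ≤ p i) (hq : ∀ i, 0 ≤ q i)
    (hpq : ∀ i, q i = 0 → p i = 0) (hp1 : ∑ i, p i = 1) (hq1 : ∑ i, q i = 1) :
    (∑ i, |p i - q i|) ^ 2 ≤ 2 * relEntropy p q := by
  have cauchySchwarz := Finset.sum_sq_le_sum_mul_sum_of_sq_le_mul Finset.univ
    (r := fun i ↦ |p i - q i|) (f := fun i ↦ (2 * p i + 4 * q i) / 3)
    (g := fun i ↦ q i * klFun (p i / q i))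
    (fun i _ ↦ by linarith [hp i, hq i])
    (fun i _ ↦ mul_nonneg (hq i) (klFun_nonneg (div_nonneg (hp i) (hq i))))
    (fun i _ ↦ by
      rw [sq_abs]
      linarith [three_mul_sub_sq_le_mul_klFun (hp i) (hq i) (hpq i)])
  have hweight : ∑ i, (2 * p i + 4 * q i) / 3 = 2 := by
    rw [← Finset.sum_div, Finset.sum_add_distrib, ← Finset.mul_sum, ← Finset.mul_sum, hp1, hq1]
    norm_num
  rwa [hweight, sum_mul_klFun_div hpq, hp1, hq1, add_sub_cancel_right] at cauchySchwarz

lemma relEntropy_mul (h : ∀ i, u i * v i = 0 → p i = 0) :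
    relEntropy p (fun i ↦ u i * v i) =
      -∑ i, negMulLog (p i) - ∑ i, p i * log (u i) - ∑ i, p i * log (v i) := by
  simp only [relEntropy, ← Finset.sum_neg_distrib, ← Finset.sum_sub_distrib]
  refine Finset.sum_congr rfl fun i _ ↦ ?_
  rcases eq_or_ne (p i) 0 with hp | hp
  · simp [hp]
  have huv : u i * v i ≠ 0 := mt (h i) hp
  rw [log_div hp huv, log_mul (left_ne_zero_of_mul huv) (right_ne_zero_of_mul huv), negMulLog]
  ring

end RelEntropy

lemma eq_zero_of_mul_marginals_eq_zero {α β : Type*} [Fintype α] [Fintype β] {R : α → β → ℝ}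
    (hR : ∀ a b, 0 ≤ R a b) {a : α} {b : β}
    (h : (∑ b', R a b') * ∑ a', R a' b = 0) : R a b = 0 := by
  rcases mul_eq_zero.1 h with h | h
  · exact congr_fun ((Fintype.sum_eq_zero_iff_of_nonneg (hR a)).1 h) b
  · exact congr_fun ((Fintype.sum_eq_zero_iff_of_nonneg fun a' ↦ hR a' b).1 h) a

section Entropy

variable {ι α β : Type} [Fintype ι] [Fintype α] [Fintype β]

/-- Conditional entropy `H(A | B)`, in bits, of a joint distribution of `(A, B)`, defined by the
chain rule `H(A | B) = H(A B) - H(B)`. -/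
noncomputable def condEnt (R : α → β → ℝ) : ℝ :=
  shannonEnt (fun x : α × β ↦ R x.1 x.2) - shannonEnt fun b ↦ ∑ a, R a b

lemma log_two_mul_logb_two (x : ℝ) : log 2 * logb 2 x = log x :=
  mul_div_cancel₀ _ (log_pos one_lt_two).ne'

lemma log_two_mul_shannonEnt (p : α → ℝ) :
    log 2 * shannonEnt p = ∑ a, negMulLog (p a) := by
  simp only [shannonEnt, negMulLog, mul_neg, Finset.mul_sum, mul_left_comm (log 2),
    log_two_mul_logb_two, neg_mul, Finset.sum_neg_distrib]

lemma log_two_mul_binEnt_add_mul_logb (n : ℕ) (x : ℝ) :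
    log 2 * (binEnt x + x * logb 2 ((n : ℝ) - 1)) = qaryEntropy n x := by
  simp only [binEnt, mul_add, mul_sub, mul_neg, mul_left_comm (log 2), log_two_mul_logb_two,
    qaryEntropy, binEntropy_eq_negMulLog_add_negMulLog_one_sub, negMulLog]
  push_cast
  ring

lemma shannonEnt_comp_equiv (e : α ≃ β) (p : β → ℝ) :
    shannonEnt (fun a ↦ p (e a)) = shannonEnt p := by
  simp only [shannonEnt, e.sum_comp fun b ↦ p b * logb 2 (p b)]

lemma shannonEnt_marginal_le {p : ι → α → ℝ} (hp : ∀ i a, 0 ≤ p i a) :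
    shannonEnt (fun a ↦ ∑ i, p i a) ≤ shannonEnt fun x : ι × α ↦ p x.1 x.2 := by
  rw [shannonEnt, shannonEnt, neg_le_neg_iff, Fintype.sum_prod_type_right]
  simp only [Finset.sum_mul]
  refine Finset.sum_le_sum fun a _ ↦ Finset.sum_le_sum fun i _ ↦ ?_
  rcases (hp i a).eq_or_lt with h | h
  · simp [← h]
  · gcongr
    · exact one_lt_two
    · exact Finset.single_le_sum (fun j _ ↦ hp j a) (Finset.mem_univ i)

lemma mutInfo_prod_le_mutInfo_add_condEnt {P : ι → α → β → ℝ} (hP : ∀ i a b, 0 ≤ P i a b) :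
    mutInfo (fun (x : ι × α) b ↦ P x.1 x.2 b) ≤
      mutInfo (fun a b ↦ ∑ i, P i a b) + condEnt fun i a ↦ ∑ b, P i a b := by
  have hmono : shannonEnt (fun y : α × β ↦ ∑ i, P i y.1 y.2) ≤
      shannonEnt fun z : (ι × α) × β ↦ P z.1.1 z.1.2 z.2 :=
    (shannonEnt_marginal_le fun i (y : α × β) ↦ hP i y.1 y.2).trans_eq
      (shannonEnt_comp_equiv (Equiv.prodAssoc ι α β) fun z ↦ P z.1 z.2.1 z.2.2).symm
  have hα (a : α) : ∑ b, ∑ i, P i a b = ∑ i, ∑ b, P i a b := Finset.sum_comm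
  simp only [mutInfo, condEnt, Fintype.sum_prod_type_right, hα]
  linarith

lemma log_two_mul_mutInfo {R : α → β → ℝ} (hR : ∀ a b, 0 ≤ R a b) :
    log 2 * mutInfo R =
      relEntropy (fun x : α × β ↦ R x.1 x.2) fun x ↦ (∑ b, R x.1 b) * ∑ a, R a x.2 := by
  rw [relEntropy_mul fun x ↦ eq_zero_of_mul_marginals_eq_zero hR, mutInfo, mul_sub, mul_add]
  simp only [log_two_mul_shannonEnt, negMulLog, neg_mul, Finset.sum_neg_distrib, Finset.sum_mul]
  rw [Fintype.sum_prod_type fun x : α × β ↦ R x.1 x.2 * log (∑ b, R x.1 b),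
    Fintype.sum_prod_type_right fun x : α × β ↦ R x.1 x.2 * log (∑ a, R a x.2)]
  ring

theorem sq_sum_abs_sub_mul_marginals_le_mutInfo {R : α → β → ℝ}
    (hR : ∀ a b, 0 ≤ R a b) (hsum : ∑ a, ∑ b, R a b = 1) :
    (∑ a, ∑ b, |R a b - (∑ b', R a b') * ∑ a', R a' b|) ^ 2 ≤ 2 * (log 2 * mutInfo R) := by
  have hprod : ∑ x : α × β, (∑ b, R x.1 b) * ∑ a, R a x.2 = 1 := by
    rw [Fintype.sum_prod_type]
    simp only [← Finset.mul_sum, ← Finset.sum_mul]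
    rw [Finset.sum_comm (f := fun b a ↦ R a b), hsum, mul_one]
  rw [log_two_mul_mutInfo hR, ← Fintype.sum_prod_type']
  exact sq_sum_abs_sub_le_two_mul_relEntropy (fun x ↦ hR x.1 x.2)
    (fun x ↦ mul_nonneg (Finset.sum_nonneg fun b _ ↦ hR x.1 b)
      (Finset.sum_nonneg fun a _ ↦ hR a x.2))
    (fun x ↦ eq_zero_of_mul_marginals_eq_zero hR) (by rwa [Fintype.sum_prod_type]) hprod

lemma half_sum_abs_sub_mul_marginals_le_sqrt_mutInfo {R : α → β → ℝ}
    (hR : ∀ a b, 0 ≤ R a b) (hsum : ∑ a, ∑ b, R a b = 1) :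
    1 / 2 * ∑ a, ∑ b, |R a b - (∑ b', R a b') * ∑ a', R a' b| ≤ 1 / √2 * √(mutInfo R) := by
  have hpinsker := sq_sum_abs_sub_mul_marginals_le_mutInfo hR hsum
  set D := ∑ a, ∑ b, |R a b - (∑ b', R a b') * ∑ a', R a' b|
  have hlog : log 2 ≤ 1 := by linarith [log_le_sub_one_of_pos (zero_lt_two (α := ℝ))]
  have hI : 0 ≤ mutInfo R :=
    nonneg_of_mul_nonneg_right (by linarith [sq_nonneg D]) (log_pos one_lt_two)
  rw [one_div √2, ← sqrt_inv, ← sqrt_mul (by norm_num)]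
  refine le_sqrt_of_sq_le ?_
  linarith [mul_le_mul_of_nonneg_right hlog hI, mul_pow (1 / 2) D 2]

lemma log_two_mul_condEnt_le_neg_sum_mul_log {R W : α → β → ℝ}
    (hR : ∀ a b, 0 ≤ R a b) (hW : ∀ a b, 0 ≤ W a b) (hW1 : ∀ b, ∑ a, W a b ≤ 1)
    (hRW : ∀ a b, W a b = 0 → R a b = 0) :
    log 2 * condEnt R ≤ -∑ a, ∑ b, R a b * log (W a b) := by
  have hmarg (b : β) : 0 ≤ ∑ a, R a b := Finset.sum_nonneg fun a _ ↦ hR a b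
  have hac (x : α × β) (hx : W x.1 x.2 * ∑ a, R a x.2 = 0) : R x.1 x.2 = 0 :=
    (mul_eq_zero.1 hx).elim (hRW x.1 x.2)
      fun h ↦ congr_fun ((Fintype.sum_eq_zero_iff_of_nonneg fun a ↦ hR a x.2).1 h) x.1
  have hmass : ∑ x : α × β, W x.1 x.2 * ∑ a, R a x.2 ≤ ∑ x : α × β, R x.1 x.2 := by
    simp only [Fintype.sum_prod_type_right, ← Finset.sum_mul]
    exact Finset.sum_le_sum fun b _ ↦ mul_le_of_le_one_left (hmarg b) (hW1 b)
  have hgibbs := relEntropy_nonneg (fun x : α × β ↦ hR x.1 x.2)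
    (fun x ↦ mul_nonneg (hW x.1 x.2) (hmarg x.2)) hac hmass
  rw [relEntropy_mul hac, ← log_two_mul_shannonEnt,
    Fintype.sum_prod_type fun x : α × β ↦ R x.1 x.2 * log (W x.1 x.2),
    Fintype.sum_prod_type_right fun x : α × β ↦ R x.1 x.2 * log (∑ a, R a x.2)] at hgibbs
  rw [condEnt, mul_sub, log_two_mul_shannonEnt fun b ↦ ∑ a, R a b]
  simp only [negMulLog, neg_mul, Finset.sum_neg_distrib, Finset.sum_mul] at hgibbs ⊢
  linarith

end Entropy

section ErrorProb

variable {K : Type*} [Fintype K] [DecidableEq K] {Q : K → K → ℝ}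

/-- The probability `Pr[A ≠ S]` under a joint distribution `Q` of `(A, S)`. -/
def errorProb (Q : K → K → ℝ) : ℝ := ∑ a, ∑ s, if a = s then 0 else Q a s

lemma sum_mul_ite_eq (Q : K → K → ℝ) (x y : ℝ) :
    ∑ a, ∑ s, Q a s * (if a = s then x else y) = (∑ a, Q a a) * x + errorProb Q * y := by
  have hsplit (a s : K) : Q a s * (if a = s then x else y) =
      (if a = s then Q a s * x else 0) + (if a = s then 0 else Q a s) * y := by
    split_ifs <;> ring
  simp only [hsplit, Finset.sum_add_distrib, Finset.sum_ite_eq, Finset.mem_univ, if_true,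
    errorProb, Finset.sum_mul]

lemma sum_ite_eq_else_const (s : K) (x c : ℝ) :
    ∑ a, (if a = s then x else c) = x + ((Fintype.card K : ℝ) - 1) * c := by
  have hsplit (a : K) : (if a = s then x else c) = c + if a = s then x - c else 0 := by
    split_ifs <;> ring
  simp only [hsplit, Finset.sum_add_distrib, Finset.sum_const, Finset.card_univ, nsmul_eq_mul,
    Finset.sum_ite_eq', Finset.mem_univ, if_true]
  ring

lemma sum_diag_add_errorProb (Q : K → K → ℝ) :
    ∑ a, Q a a + errorProb Q = ∑ a, ∑ s, Q a s := by
  simpa using (sum_mul_ite_eq Q 1 1).symm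

lemma errorProb_nonneg (hQ : ∀ a s, 0 ≤ Q a s) : 0 ≤ errorProb Q :=
  Finset.sum_nonneg fun a _ ↦ Finset.sum_nonneg fun s _ ↦ ite_nonneg le_rfl (hQ a s)

lemma eq_zero_of_errorProb_eq_zero (hQ : ∀ a s, 0 ≤ Q a s) (h : errorProb Q = 0) {a s : K}
    (has : a ≠ s) : Q a s = 0 := by
  have hnonneg (a s : K) : 0 ≤ if a = s then 0 else Q a s := ite_nonneg le_rfl (hQ a s)
  have hrow := congr_fun ((Fintype.sum_eq_zero_iff_of_nonneg
    fun a ↦ Finset.sum_nonneg fun s _ ↦ hnonneg a s).1 h) a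
  simpa [has] using congr_fun ((Fintype.sum_eq_zero_iff_of_nonneg (hnonneg a)).1 hrow) s

lemma one_lt_card_of_errorProb_ne_zero (h : errorProb Q ≠ 0) : 1 < Fintype.card K := by
  contrapose! h
  have := Fintype.card_le_one_iff_subsingleton.1 h
  exact Finset.sum_eq_zero fun a _ ↦ Finset.sum_eq_zero fun s _ ↦ if_pos (Subsingleton.elim a s)

lemma errorProb_sum {T : Type*} [Fintype T] (P : K → K → T → ℝ) :
    errorProb (fun a s ↦ ∑ t, P a s t) = ∑ a, ∑ s, ∑ t, if a = s then 0 else P a s t :=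
  Finset.sum_congr rfl fun a _ ↦ Finset.sum_congr rfl fun s _ ↦ by split_ifs <;> simp

/-- The reference channel of Fano's inequality: the probability `fanoChannel ε a s` of guessing `a`
when the secret is `s`, for a guess that is wrong with probability `ε` and then uniform. -/
noncomputable def fanoChannel (ε : ℝ) (a s : K) : ℝ :=
  if a = s then 1 - ε else ε / ((Fintype.card K : ℝ) - 1)

lemma fanoChannel_nonneg {ε : ℝ} (hε0 : 0 ≤ ε) (hε1 : ε ≤ 1) (a s : K) :
    0 ≤ fanoChannel ε a s := by
  have hcard : (1 : ℝ) ≤ Fintype.card K := by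
    exact_mod_cast Fintype.card_pos_iff.2 ⟨a⟩
  exact ite_nonneg (sub_nonneg.2 hε1) (div_nonneg hε0 (sub_nonneg.2 hcard))

lemma sum_fanoChannel_le_one {ε : ℝ} (hε : 0 ≤ ε) (s : K) : ∑ a, fanoChannel ε a s ≤ 1 := by
  have hwrong := mul_le_of_le_one_right hε (div_self_le_one ((Fintype.card K : ℝ) - 1))
  simp only [fanoChannel, sum_ite_eq_else_const]
  rw [mul_div_left_comm]
  linarith

lemma eq_zero_of_fanoChannel_errorProb_eq_zero (hQ : ∀ a s, 0 ≤ Q a s)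
    (hsum : ∑ a, ∑ s, Q a s = 1) {a s : K} (h : fanoChannel (errorProb Q) a s = 0) :
    Q a s = 0 := by
  rw [fanoChannel] at h
  split_ifs at h with has
  · subst has
    have hdiag : ∑ a, Q a a = 0 := by linarith [sum_diag_add_errorProb Q]
    exact congr_fun ((Fintype.sum_eq_zero_iff_of_nonneg fun a ↦ hQ a a).1 hdiag) a
  · have hcard : (1 : ℝ) < Fintype.card K := by
      exact_mod_cast Fintype.one_lt_card_iff.2 ⟨a, s, has⟩
    have herr := (div_eq_zero_iff.1 h).resolve_right (sub_pos.2 hcard).ne'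
    exact eq_zero_of_errorProb_eq_zero hQ herr has

lemma neg_sum_mul_log_fanoChannel (hsum : ∑ a, ∑ s, Q a s = 1) :
    -∑ a, ∑ s, Q a s * log (fanoChannel (errorProb Q) a s) =
      qaryEntropy (Fintype.card K) (errorProb Q) := by
  have hdiag : ∑ a, Q a a = 1 - errorProb Q := by linarith [sum_diag_add_errorProb Q]
  simp only [fanoChannel, apply_ite log, sum_mul_ite_eq, hdiag, qaryEntropy,
    binEntropy_eq_negMulLog_add_negMulLog_one_sub, negMulLog]
  rcases eq_or_ne (errorProb Q) 0 with herr | herr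
  · simp [herr]
  have hcard : (Fintype.card K : ℝ) - 1 ≠ 0 :=
    sub_ne_zero.2 (by exact_mod_cast (one_lt_card_of_errorProb_ne_zero herr).ne')
  rw [log_div herr hcard]
  push_cast
  ring

end ErrorProb

section Fano

variable {K : Type} [Fintype K] [DecidableEq K] {Q : K → K → ℝ}

theorem log_two_mul_condEnt_le_qaryEntropy_errorProb (hQ : ∀ a s, 0 ≤ Q a s)
    (hsum : ∑ a, ∑ s, Q a s = 1) :
    log 2 * condEnt Q ≤ qaryEntropy (Fintype.card K) (errorProb Q) := by
  have herr0 : 0 ≤ errorProb Q := errorProb_nonneg hQ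
  have herr1 : errorProb Q ≤ 1 := by
    linarith [sum_diag_add_errorProb Q, Finset.sum_nonneg fun a (_ : a ∈ Finset.univ) ↦ hQ a a]
  rw [← neg_sum_mul_log_fanoChannel hsum]
  exact log_two_mul_condEnt_le_neg_sum_mul_log hQ (fanoChannel_nonneg herr0 herr1)
    (sum_fanoChannel_le_one herr0) fun a s ↦ eq_zero_of_fanoChannel_errorProb_eq_zero hQ hsum

-- `1 - 1 / |K|` is the point up to which the right-hand side increases with `ε`.
theorem condEnt_le_of_errorProb_le (hK : 2 ≤ Fintype.card K) (hQ : ∀ a s, 0 ≤ Q a s)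
    (hsum : ∑ a, ∑ s, Q a s = 1) {ε : ℝ} (hε : ε ≤ 1 - 1 / Fintype.card K)
    (herr : errorProb Q ≤ ε) :
    condEnt Q ≤ binEnt ε + ε * logb 2 ((Fintype.card K : ℝ) - 1) := by
  have herr0 : 0 ≤ errorProb Q := errorProb_nonneg hQ
  refine le_of_mul_le_mul_left ?_ (log_pos one_lt_two)
  calc log 2 * condEnt Q ≤ qaryEntropy (Fintype.card K) (errorProb Q) :=
        log_two_mul_condEnt_le_qaryEntropy_errorProb hQ hsum
    _ ≤ qaryEntropy (Fintype.card K) ε :=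
        (qaryEntropy_strictMonoOn hK).monotoneOn ⟨herr0, herr.trans hε⟩ ⟨herr0.trans herr, hε⟩ herr
    _ = log 2 * (binEnt ε + ε * logb 2 ((Fintype.card K : ℝ) - 1)) :=
        (log_two_mul_binEnt_add_mul_logb _ _).symm

end Fano

theorem pinsker_fano_secrecy_bound_general {K T : Type} [Fintype K] [Fintype T] [DecidableEq K]
    (hK : 2 ≤ Fintype.card K) {P : K → K → T → ℝ} (hnonneg : ∀ sA s t, 0 ≤ P sA s t)
    (hsum : ∑ sA, ∑ s, ∑ t, P sA s t = 1) {δ ε : ℝ} (hε : ε ≤ 1 - 1 / Fintype.card K)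
    (hI : mutInfo (fun s t => ∑ sA, P sA s t) ≤ δ)
    (herr : ∑ sA, ∑ s, ∑ t, (if sA = s then (0 : ℝ) else P sA s t) ≤ ε) :
    1 / 2 * ∑ sA, ∑ s, ∑ t,
        |P sA s t - (∑ t', P sA s t') * (∑ sA', ∑ s', P sA' s' t)| ≤
      (1 / √2) * √(δ + binEnt ε + ε * logb 2 ((Fintype.card K : ℝ) - 1)) := by
  let R : K × K → T → ℝ := fun x t ↦ P x.1 x.2 t
  have hR1 : ∑ x, ∑ t, R x t = 1 := by rwa [Fintype.sum_prod_type]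
  have hpinsker := half_sum_abs_sub_mul_marginals_le_sqrt_mutInfo
    (fun x ↦ hnonneg x.1 x.2 : ∀ x t, 0 ≤ R x t) hR1
  have hchain : mutInfo R ≤ _ := mutInfo_prod_le_mutInfo_add_condEnt hnonneg
  have hfano := condEnt_le_of_errorProb_le hK
    (fun sA s ↦ Finset.sum_nonneg fun t _ ↦ hnonneg sA s t) hsum hε
    ((errorProb_sum P).trans_le herr)
  simp only [Fintype.sum_prod_type] at hpinsker
  refine hpinsker.trans ?_
  gcongr
  linarith

/-- Pinsker–Fano secrecy bound: if `P` is a distribution on `K × K × T` with coordinates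
`(S_A, S, T)`, `I(S:T) ≤ ε`, `Pr[S_A ≠ S] ≤ ε` and `0 ≤ ε ≤ 1/2`, then the variational
distance between `P` and the product of its `(S_A,S)`- and `T`-marginals is at most
`(1/√2)·√(ε + h(ε) + ε·log₂(|K|-1))`. -/
theorem pinsker_fano_secrecy_bound {K T : Type} [Fintype K] [Fintype T] [DecidableEq K]
    (hK : 2 ≤ Fintype.card K)
    (P : K → K → T → ℝ)
    (hnonneg : ∀ sA s t, 0 ≤ P sA s t)
    (hsum : ∑ sA, ∑ s, ∑ t, P sA s t = 1)
    (ε : ℝ) (hε0 : 0 ≤ ε) (hε : ε ≤ 1/2)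
    (hI : mutInfo (fun s t => ∑ sA, P sA s t) ≤ ε)
    (herr : ∑ sA, ∑ s, ∑ t, (if sA = s then (0 : ℝ) else P sA s t) ≤ ε) :
    (1/2) * ∑ sA, ∑ s, ∑ t,
        |P sA s t - (∑ t', P sA s t') * (∑ sA', ∑ s', P sA' s' t)| ≤
      (1 / Real.sqrt 2) *
        Real.sqrt (ε + binEnt ε + ε * Real.logb 2 ((Fintype.card K : ℝ) - 1)) := by
  have hcard : (1 / Fintype.card K : ℝ) ≤ 1 / 2 := by gcongr; exact_mod_cast hK
  exact pinsker_fano_secrecy_bound_general hK hnonneg hsum (by linarith) hI herr
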